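/- Let a, b, c, d be positive integers with a < b and let A be the matrix with rows (a, b) and (c, d), and suppose A ∈ SL(2,ℤ). If p_1,…,p_k are integers with p_i ≥ 2 for i ∈ {2,…,k} and b/d = [[p_1,…,p_k]], then A = ε·M(p_1,…,p_k,0) for some ε ∈ {1,−1}. -/

import Mathlib

/-- The continuant matrix `M(c)` for an integer `c`. -/
def M (c : ℤ) : Matrix (Fin 2) (Fin 2) ℤ := !![c, -1; 1, 0]

/-- `M(c₁,…,cₙ) := M(c₁)·…·M(cₙ)`. -/
def Mseq (l : List ℤ) : Matrix (Fin 2) (Fin 2) ℤ := (l.map M).prod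

/-- The negative continued fraction `[[q₁,…,q_k]]` of a list of integers,
defined by `[[q_k]] = q_k` and `[[q_i,…,q_k]] = q_i − 1/[[q_{i+1},…,q_k]]`. -/
def ncf : List ℤ → ℚ
  | [] => 0
  | [q] => (q : ℚ)
  | q :: l => (q : ℚ) - 1 / ncf l

/-!
If `A = M(p₁)·A'`, then `A'` has rows `(c, d)` and `(p₁c - a, p₁d - b)`, so passing from `A` to `A'`
performs one step of the Euclidean algorithm (rounding up) on the column `(b, d)` and removes `p₁`
from the continued fraction of `b / d`. As `[[p₂,…,p_k]] > 1` when all its entries are at least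
`2`, the positivity and order constraints on `A` pass to `A'`, and induction on `k` ends at the
unipotent matrix `-M(p_k, 0)`.
-/

theorem Mseq_cons (q : ℤ) (l : List ℤ) : Mseq (q :: l) = M q * Mseq l :=
  List.prod_cons

theorem Mseq_pair_zero (q : ℤ) : Mseq [q, 0] = -!![1, q; 0, 1] := by
  simp [Mseq, M]

theorem M_mul_euclid_step (q a b c d : ℤ) :
    M q * !![c, d; q * c - a, q * d - b] = !![a, b; c, d] := by
  simp [M]

theorem ncf_singleton (q : ℤ) : ncf [q] = q :=
  rfl

theorem ncf_cons_cons (q r : ℤ) (l : List ℤ) : ncf (q :: r :: l) = q - 1 / ncf (r :: l) :=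
  rfl

theorem one_lt_ncf_cons {q : ℤ} {l : List ℤ} (h : ∀ x ∈ q :: l, 2 ≤ x) : 1 < ncf (q :: l) := by
  have hq : (2 : ℚ) ≤ q := mod_cast h q List.mem_cons_self
  induction l generalizing q with
  | nil => exact ncf_singleton q ▸ one_lt_two.trans_le hq
  | cons r l ih =>
    have htail : ∀ x ∈ r :: l, 2 ≤ x := fun x hx => h x (List.mem_cons_of_mem q hx)
    have hinv : (ncf (r :: l))⁻¹ < 1 :=
      inv_lt_one_of_one_lt₀ (ih htail (mod_cast htail r List.mem_cons_self))
    rw [ncf_cons_cons, one_div]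
    linarith

theorem eq_div_of_sub_one_div_eq_div {K : Type*} [Field K] {q x b d : K}
    (hx : x ≠ 0) (hd : d ≠ 0) (h : q - 1 / x = b / d) : x = d / (q * d - b) := by
  have hmul : x * (q * d - b) = d := by
    field_simp at h
    linear_combination h
  exact eq_div_of_mul_eq (right_ne_zero_of_mul (hmul ▸ hd)) hmul

theorem lower_left_lt_of_det_pos {R : Type*} [Ring R] [LinearOrder R] [IsOrderedRing R]
    {a b c d : R} (hb : 0 ≤ b) (hd : 0 ≤ d) (hab : a ≤ b) (hdet : 0 < a * d - b * c) : c < d := by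
  have hlt : b * c < b * d := (sub_pos.mp hdet).trans_le (mul_le_mul_of_nonneg_right hab hd)
  exact lt_of_not_ge fun hdc => hlt.not_ge (mul_le_mul_of_nonneg_left hdc hb)

theorem eq_unipotent_of_det_eq_one {a b c d q : ℤ} (ha : 0 < a) (hab : a < b) (hd : 0 ≤ d)
    (hdet : a * d - b * c = 1) (hbd : b = q * d) : !![a, b; c, d] = !![1, q; 0, 1] := by
  have hd_one : d = 1 :=
    Int.eq_one_of_dvd_one hd ⟨a - q * c, by linear_combination -hdet - c * hbd⟩
  have ha_sub : a - 1 = 0 :=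
    Int.eq_zero_of_dvd_of_nonneg_of_lt (by lia) (by lia : a - 1 < b)
      ⟨c, by linear_combination hdet - a * hd_one⟩
  have ha_one : a = 1 := by lia
  have hc_zero : c = 0 := by
    have hbc : b * c = 0 := by linear_combination a * hd_one + ha_sub - hdet
    exact (mul_eq_zero.mp hbc).resolve_left (ha.trans hab).ne'
  rw [hbd, ha_one, hc_zero, hd_one, mul_one]

theorem eq_neg_Mseq_of_ncf_eq_div {a b c d q : ℤ} {l : List ℤ} (ha : 0 < a) (hab : a < b)
    (hd : 0 < d) (hdet : a * d - b * c = 1) (hl : ∀ x ∈ l, 2 ≤ x)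
    (hncf : ncf (q :: l) = b / d) : !![a, b; c, d] = -Mseq (q :: l ++ [0]) := by
  induction l generalizing a b c d q with
  | nil =>
    have hd_ne : (d : ℚ) ≠ 0 := mod_cast hd.ne'
    rw [ncf_singleton, eq_div_iff hd_ne] at hncf
    have hbd : b = q * d := mod_cast hncf.symm
    rw [eq_unipotent_of_det_eq_one ha hab hd.le hdet hbd, List.singleton_append, Mseq_pair_zero,
      neg_neg]
  | cons r l ih =>
    have hb : 0 < b := ha.trans hab
    have hone_lt : 1 < ncf (r :: l) := one_lt_ncf_cons hl
    have htail : ncf (r :: l) = d / (q * d - b : ℤ) := mod_cast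
      eq_div_of_sub_one_div_eq_div (zero_lt_one.trans hone_lt).ne' (mod_cast hd.ne') hncf
    obtain ⟨hrem_pos, hrem_lt⟩ : 0 < q * d - b ∧ q * d - b < d := by
      rw [htail, one_lt_div_iff] at hone_lt
      norm_cast at hone_lt
      exact hone_lt.resolve_right fun h => (h.2.trans h.1).not_gt hd
    have hcd : c < d := lower_left_lt_of_det_pos hb.le hd.le hab.le (hdet ▸ one_pos)
    have hc : 0 < c := by
      have had : 1 < a * d := one_lt_mul_of_le_of_lt ha (by lia)
      exact pos_of_mul_pos_right (a := b) (by linarith) hb.le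
    have hdet_rem : c * (q * d - b) - d * (q * c - a) = 1 := by linear_combination hdet
    have hrem := ih hc hcd hrem_pos hdet_rem
      (fun x hx => hl x (List.mem_cons_of_mem r hx)) htail
    rw [← M_mul_euclid_step q a b c d, hrem, mul_neg, ← Mseq_cons]
    rfl

/-- Let `a, b, c, d` be positive integers with `a < b` and suppose the matrix
`A = !![a, b; c, d]` has determinant `1`. If `p₁,…,p_k` are integers with `pᵢ ≥ 2`
for `i ∈ {2,…,k}` and `b/d = [[p₁,…,p_k]]`, then `A = ε·M(p₁,…,p_k,0)` for some
`ε ∈ {1,−1}`. -/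
theorem presentation_of_pos_entries (a b c d : ℤ)
    (ha : 0 < a) (hb : 0 < b) (hc : 0 < c) (hd : 0 < d) (hab : a < b)
    (hdet : a * d - b * c = 1)
    (p : List ℤ) (hp : p ≠ [])
    (hp2 : ∀ i, 1 ≤ i → i < p.length → 2 ≤ p.getD i 0)
    (hncf : ncf p = (b : ℚ) / (d : ℚ)) :
    ∃ ε : ℤ, (ε = 1 ∨ ε = -1) ∧ !![a, b; c, d] = ε • Mseq (p ++ [0]) := by
  obtain ⟨q, l, rfl⟩ := List.exists_cons_of_ne_nil hp
  have hl : ∀ x ∈ l, 2 ≤ x := by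
    intro x hx
    obtain ⟨i, hi, rfl⟩ := List.getElem_of_mem hx
    simpa [hi] using hp2 (i + 1) (by simp) (by simpa using hi)
  refine ⟨-1, Or.inr rfl, ?_⟩
  rw [neg_one_smul]
  exact eq_neg_Mseq_of_ncf_eq_div ha hab hd hdet hl hncf
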